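/- Let K be a field whose characteristic is a prime p ≥ 7. Then for every matroid N (on any type β), there is no online matroid embedding from the class of all K-representable matroids into N. -/

import Mathlib

open Set

/-- The rank of a set in a matroid: the supremum of the cardinalities of its
independent subsets. -/
noncomputable def mRank {α : Type*} (M : Matroid α) (S : Set α) : ℕ∞ :=
  ⨆ I ∈ {I : Set α | M.Indep I ∧ I ⊆ S}, I.encard

/-- The rank of a set of vectors: the dimension of its linear span. -/
noncomputable def spanRank (K : Type*) [Field K] {W : Type*} [AddCommGroup W] [Module K W]
    (S : Set W) : ℕ :=
  Module.finrank K (Submodule.span K S)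

/-- A matroid is representable over a field `K` if independence coincides with
`K`-linear independence of an assignment of vectors to the elements. -/
def RepOver (K : Type*) [Field K] {α : Type*} (M : Matroid α) : Prop :=
  ∃ (ι : Type) (f : α → ι → K), ∀ I : Set α,
    M.Indep I ↔ I ⊆ M.E ∧ LinearIndependent K (fun x : I => f (x : α))

/-- The `k`-prefix of an ordered matroid on `Fin m`: its restriction to the
first `k` elements, viewed as a matroid on `Fin k`. -/
def prefixMatroid {k m : ℕ} (h : k ≤ m) (M : Matroid (Fin m)) : Matroid (Fin k) :=
  M.comap (Fin.castLE h)

/-- An online matroid morphism (OMM) of the class `P` of ordered matroids into the host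
matroid `N`: a rank-preserving map for each matroid of the class, consistent on prefixes. -/
def OMMof (P : (m : ℕ) → Matroid (Fin m) → Prop) {β : Type*} (N : Matroid β) : Prop :=
  ∃ f : (m : ℕ) → Matroid (Fin m) → (Fin m → β),
    (∀ m (M : Matroid (Fin m)), P m M →
      ∀ S : Set (Fin m), S ⊆ M.E → mRank N (f m M '' S) = mRank M S) ∧
    (∀ k m (hkm : k ≤ m) (M : Matroid (Fin m)), P m M →
      ∀ i : Fin k, f k (prefixMatroid hkm M) i = f m M (Fin.castLE hkm i))

/-- An online matroid embedding (OME): an online matroid morphism all of whose maps are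
injective. -/
def OMEof (P : (m : ℕ) → Matroid (Fin m) → Prop) {β : Type*} (N : Matroid β) : Prop :=
  ∃ f : (m : ℕ) → Matroid (Fin m) → (Fin m → β),
    (∀ m (M : Matroid (Fin m)), P m M → Function.Injective (f m M)) ∧
    (∀ m (M : Matroid (Fin m)), P m M →
      ∀ S : Set (Fin m), S ⊆ M.E → mRank N (f m M '' S) = mRank M S) ∧
    (∀ k m (hkm : k ≤ m) (M : Matroid (Fin m)), P m M →
      ∀ i : Fin k, f k (prefixMatroid hkm M) i = f m M (Fin.castLE hkm i))

/-!
Let `A, B, C, D` be points of the projective plane over `K` in general position, `E` a further point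
of the line `AC` and `F` one of `BD`. If `K` has at least four elements, then `F` can be placed in
two ways giving the same matroid on these six points, but such that the next point
`X = AB ∩ CD` lies on `EF` for one choice and not for the other. An online morphism maps the six
points identically in both cases. As the lines `AB` and `CD` form a modular pair, submodularity of
the rank in the host makes the closures of their images meet in rank at most one, so the two images
of `X` are parallel. Then `X` lies on `EF` for both choices or for neither.
-/

section Rank

variable {α : Type*} {M : Matroid α}

lemma mRank_eq_eRk (M : Matroid α) (S : Set α) : mRank M S = M.eRk S := by
  refine le_antisymm (iSup₂_le fun I hI => hI.1.encard_le_eRk_of_subset hI.2) ?_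
  obtain ⟨I, hI⟩ := M.exists_isBasis' S
  exact hI.eRk_eq_encard.trans_le (le_iSup₂_of_le I ⟨hI.indep, hI.subset⟩ le_rfl)

lemma isNonloop_iff_eRk_eq_one {e : α} : M.IsNonloop e ↔ M.eRk {e} = 1 := by
  rw [← Matroid.indep_singleton, Matroid.indep_iff_eRk_eq_encard_of_finite (finite_singleton e),
    encard_singleton]

lemma mem_closure_iff_eRk_insert_eq {S : Set α} {e : α} (hS : M.IsRkFinite S) (he : e ∈ M.E) :
    e ∈ M.closure S ↔ M.eRk (insert e S) = M.eRk S := by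
  refine ⟨fun h => ?_, fun h => ?_⟩
  · rw [← M.eRk_closure_eq, Matroid.closure_insert_eq_of_mem_closure h, M.eRk_closure_eq]
  · by_contra hcl
    rw [Matroid.eRk_insert_eq_add_one ⟨he, hcl⟩] at h
    exact (ENat.lt_add_one_iff (Matroid.eRk_ne_top_iff.2 hS)).2 le_rfl |>.ne' h

lemma mem_closure_singleton_of_eRk_le_one {S : Set α} {e f : α} (hS : M.eRk S ≤ 1)
    (he : M.IsNonloop e) (heS : e ∈ S) (hf : f ∈ M.E) (hfS : f ∈ S) : f ∈ M.closure {e} := by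
  rw [mem_closure_iff_eRk_insert_eq (M.isRkFinite_singleton) hf, he.eRk_eq]
  refine le_antisymm ((M.eRk_mono (pair_subset hfS heS)).trans hS) ?_
  exact he.eRk_eq.symm.trans_le (M.eRk_mono (by simp))

lemma eRk_closure_inter_closure_le {S T : Set α} {n : ℕ∞} (hfin : M.IsRkFinite (S ∪ T))
    (h : M.eRk S + M.eRk T ≤ n + M.eRk (S ∪ T)) : M.eRk (M.closure S ∩ M.closure T) ≤ n := by
  have hsub := (M.eRk_inter_add_eRk_union_le (M.closure S) (M.closure T)).trans
    (by simpa only [M.eRk_closure_eq] using h)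
  rw [M.eRk_union_closure_left_eq, M.eRk_union_closure_right_eq] at hsub
  exact (ENat.add_le_add_iff_right (Matroid.eRk_ne_top_iff.2 hfin)).1 hsub

end Rank

section RankPreserving

variable {α β : Type*} {M M' : Matroid α} {N : Matroid β} {g g' : α → β}

/-- A map of matroids is rank-preserving if the image of every set has the same rank as the set. -/
def RankPreserving (M : Matroid α) (N : Matroid β) (g : α → β) : Prop :=
  ∀ S : Set α, N.eRk (g '' S) = M.eRk S

lemma RankPreserving.isNonloop (hg : RankPreserving M N g) {e : α} (he : M.IsNonloop e) :
    N.IsNonloop (g e) := by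
  rw [isNonloop_iff_eRk_eq_one, ← image_singleton, hg, he.eRk_eq]

lemma RankPreserving.mem_closure_image_iff [Finite α] (hg : RankPreserving M N g) {S : Set α}
    {e : α} (he : M.IsNonloop e) : g e ∈ N.closure (g '' S) ↔ e ∈ M.closure S := by
  rw [mem_closure_iff_eRk_insert_eq (M.isRkFinite_of_finite S.toFinite) he.mem_ground,
    mem_closure_iff_eRk_insert_eq (N.isRkFinite_of_finite (S.toFinite.image g))
      (hg.isNonloop he).mem_ground, ← image_insert_eq, hg, hg]

-- Modularity of `S` and `T` forces the images of `e` under `g` and `g'` to be parallel in `N`.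
lemma RankPreserving.mem_closure_of_eqOn [Finite α] (hg : RankPreserving M N g)
    (hg' : RankPreserving M' N g') {S T U : Set α} (hgg' : EqOn g g' (S ∪ T ∪ U))
    (hST : M.eRk S + M.eRk T ≤ 1 + M.eRk (S ∪ T)) {e : α} (he : M.IsNonloop e)
    (he' : M'.IsNonloop e) (heM : e ∈ M.closure S ∩ M.closure T)
    (heM' : e ∈ M'.closure S ∩ M'.closure T) (heU : e ∈ M.closure U) : e ∈ M'.closure U := by
  have hS : g '' S = g' '' S := image_congr (hgg'.mono (by grind))
  have hT : g '' T = g' '' T := image_congr (hgg'.mono (by grind))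
  have hU : g '' U = g' '' U := image_congr (hgg'.mono (by grind))
  have hrank : N.eRk (N.closure (g '' S) ∩ N.closure (g '' T)) ≤ 1 := by
    refine eRk_closure_inter_closure_le (N.isRkFinite_of_finite (toFinite _)) ?_
    rwa [← image_union, hg, hg, hg]
  have hge : g e ∈ N.closure (g '' S) ∩ N.closure (g '' T) :=
    ⟨(hg.mem_closure_image_iff he).2 heM.1, (hg.mem_closure_image_iff he).2 heM.2⟩
  have hge' : g' e ∈ N.closure (g '' S) ∩ N.closure (g '' T) := by
    rw [hS, hT]
    exact ⟨(hg'.mem_closure_image_iff he').2 heM'.1, (hg'.mem_closure_image_iff he').2 heM'.2⟩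
  have hparallel : g' e ∈ N.closure {g e} := mem_closure_singleton_of_eRk_le_one hrank
    (hg.isNonloop he) hge (hg'.isNonloop he').mem_ground hge'
  rw [← hg'.mem_closure_image_iff he', ← hU]
  exact N.closure_subset_closure_of_subset_closure
    (singleton_subset_iff.2 ((hg.mem_closure_image_iff he).2 heU)) hparallel

end RankPreserving

section OnlineMorphism

variable {P : (m : ℕ) → Matroid (Fin m) → Prop} {β : Type*} {N : Matroid β}

lemma OMEof.ommof (h : OMEof P N) : OMMof P N :=
  let ⟨f, _, hrank, hprefix⟩ := h
  ⟨f, hrank, hprefix⟩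

lemma OMMof.exists_rankPreserving_eqOn (h : OMMof P N) {k m : ℕ} (hkm : k ≤ m)
    {M M' : Matroid (Fin m)} (hM : P m M) (hM' : P m M') (hE : M.E = univ) (hE' : M'.E = univ)
    (hpre : prefixMatroid hkm M = prefixMatroid hkm M') :
    ∃ g g' : Fin m → β, RankPreserving M N g ∧ RankPreserving M' N g' ∧
      EqOn g g' (range (Fin.castLE hkm)) := by
  obtain ⟨f, hrank, hprefix⟩ := h
  refine ⟨f m M, f m M', fun S => ?_, fun S => ?_, ?_⟩
  · simpa only [mRank_eq_eRk] using hrank m M hM S (hE ▸ subset_univ S)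
  · simpa only [mRank_eq_eRk] using hrank m M' hM' S (hE' ▸ subset_univ S)
  · rintro _ ⟨i, rfl⟩
    rw [← hprefix k m hkm M hM, ← hprefix k m hkm M' hM', hpre]

end OnlineMorphism

section LinearMatroid

variable {K V ι κ : Type*} [DivisionRing K] [AddCommGroup V] [Module K V]

/-- The matroid on the index set of a family of vectors in which a set is independent when the
subfamily it indexes is linearly independent. -/
def linearMatroid (K : Type*) [DivisionRing K] [Module K V] (v : ι → V) : Matroid ι :=
  (IndepMatroid.ofFinitary univ (LinearIndepOn K v) (linearIndepOn_empty K v)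
    (fun _ _ hJ hIJ => hJ.mono hIJ)
    (fun I B hI hImax hB => by
      by_contra! hcon
      refine hImax ⟨hI, fun J hJ hIJ e heJ => ?_⟩
      have hBI : v '' B ⊆ Submodule.span K (v '' I) := by
        rintro _ ⟨b, hb, rfl⟩
        exact hI.mem_span_iff.2 fun hins => by_contra fun hbI => hcon b ⟨hb, hbI⟩ hins
      have heB : v e ∈ Submodule.span K (v '' B) :=
        hB.prop.mem_span_iff.2 fun hins => hB.le_of_ge hins (subset_insert e B) (mem_insert e B)
      exact hI.mem_span_iff.1 (Submodule.span_le.2 hBI heB) (hJ.mono (insert_subset heJ hIJ)))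
    (fun _ hI => linearIndepOn_iff_linearIndepOn_finset.2 fun t ht => hI t ht t.finite_toSet)
    (fun I _ => subset_univ I)).matroid

variable {v : ι → V}

@[simp]
lemma linearMatroid_ground : (linearMatroid K v).E = univ := rfl

@[simp]
lemma linearMatroid_indep_iff {I : Set ι} :
    (linearMatroid K v).Indep I ↔ LinearIndepOn K v I := Iff.rfl

lemma linearMatroid_isNonloop_iff {e : ι} : (linearMatroid K v).IsNonloop e ↔ v e ≠ 0 := by
  rw [← Matroid.indep_singleton, linearMatroid_indep_iff, linearIndepOn_singleton_iff]

lemma linearMatroid_comap (f : κ → ι) :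
    (linearMatroid K v).comap f = linearMatroid K (v ∘ f) :=
  Matroid.ext_indep rfl fun _ _ =>
    ⟨fun h => h.1.comp_of_image h.2, fun h => ⟨h.image_of_comp f v, h.injOn.of_comp⟩⟩

lemma mem_linearMatroid_closure_iff {S : Set ι} {e : ι} :
    e ∈ (linearMatroid K v).closure S ↔ v e ∈ Submodule.span K (v '' S) := by
  obtain ⟨I, hI⟩ := (linearMatroid K v).exists_isBasis S
  have mem_closure_iff (x : ι) :
      x ∈ (linearMatroid K v).closure I ↔ v x ∈ Submodule.span K (v '' I) := by
    rw [hI.indep.mem_closure_iff', LinearIndepOn.mem_span_iff hI.indep]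
    simp
  have hspan : Submodule.span K (v '' S) = Submodule.span K (v '' I) := by
    refine le_antisymm (Submodule.span_le.2 ?_) (Submodule.span_mono (image_mono hI.subset))
    rintro _ ⟨s, hs, rfl⟩
    exact (mem_closure_iff s).1 (hI.subset_closure hs)
  rw [← hI.closure_eq_closure, mem_closure_iff, hspan]

lemma linearMatroid_isBase_iff (hv : Submodule.span K (range v) = ⊤) {B : Set ι} :
    (linearMatroid K v).IsBase B ↔ LinearIndepOn K v B ∧ Submodule.span K (v '' B) = ⊤ := by
  rw [Matroid.isBase_iff_indep_closure_eq, linearMatroid_indep_iff, linearMatroid_ground,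
    eq_univ_iff_forall, ← top_le_iff, ← hv, Submodule.span_le, range_subset_iff]
  simp only [mem_linearMatroid_closure_iff, SetLike.mem_coe]

end LinearMatroid

section Coordinates

variable {K : Type*} [Field K] {ι : Type*} {n : ℕ}

lemma repOver_linearMatroid {κ : Type} (v : ι → κ → K) : RepOver K (linearMatroid K v) :=
  ⟨κ, v, fun I => (and_iff_right (subset_univ I)).symm⟩

lemma linearMatroid_isBase_iff_det_ne_zero [LinearOrder ι] {v : ι → Fin n → K}
    (hv : Submodule.span K (range v) = ⊤) {B : Set ι} :
    (linearMatroid K v).IsBase B ↔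
      ∃ s : Fin n ↪o ι, range s = B ∧ (Matrix.of fun i => v (s i)).det ≠ 0 := by
  have det_ne_zero_iff (s : Fin n ↪o ι) :
      (Matrix.of fun i => v (s i)).det ≠ 0 ↔ LinearIndependent K (v ∘ s) := by
    rw [← isUnit_iff_ne_zero, ← Matrix.isUnit_iff_isUnit_det,
      ← Matrix.linearIndependent_rows_iff_isUnit]
    rfl
  rw [linearMatroid_isBase_iff hv]
  constructor
  · rintro ⟨hB, hspan⟩
    have hcard : B.encard = n := by
      rw [← toENat_rank_span_set hB, hspan, rank_top, rank_fin_fun, Cardinal.toENat_nat]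
    have hBfin : B.Finite := finite_of_encard_eq_coe hcard
    have hBcard : hBfin.toFinset.card = n := by
      rwa [hBfin.encard_eq_coe_toFinset_card, Nat.cast_inj] at hcard
    have hrange : range (hBfin.toFinset.orderEmbOfFin hBcard) = B := by
      rw [Finset.range_orderEmbOfFin, hBfin.coe_toFinset]
    refine ⟨hBfin.toFinset.orderEmbOfFin hBcard, hrange, (det_ne_zero_iff _).2 ?_⟩
    rwa [← linearIndepOn_range_iff (RelEmbedding.injective _), hrange]
  · rintro ⟨s, rfl, hdet⟩
    have hs := (det_ne_zero_iff s).1 hdet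
    refine ⟨(linearIndepOn_range_iff s.injective v).2 hs, ?_⟩
    rw [← range_comp]
    exact hs.span_eq_top_of_card_eq_finrank' (by simp)

lemma linearMatroid_eq_of_det_eq_zero_iff [LinearOrder ι] {v w : ι → Fin n → K}
    (hv : Submodule.span K (range v) = ⊤) (hw : Submodule.span K (range w) = ⊤)
    (h : ∀ s : Fin n ↪o ι,
      (Matrix.of fun i => v (s i)).det = 0 ↔ (Matrix.of fun i => w (s i)).det = 0) :
    linearMatroid K v = linearMatroid K w :=
  Matroid.ext_isBase rfl fun B _ => by
    simp only [linearMatroid_isBase_iff_det_ne_zero hv, linearMatroid_isBase_iff_det_ne_zero hw,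
      ne_eq, h]

end Coordinates

section Configuration

variable {K : Type*} [Field K]

/-- Points `A, B, C, D, E, F, X` of the projective plane, in this order: `E` lies on `AC`, `F` lies
on `BD`, and `X` is the intersection of `AB` and `CD`. The parameters are the positions of `E` and
`F` on their lines, `E` being parametrised so that `EF` passes through `X` exactly when `t = a`. -/
def concurrencyConfig (a t : K) : Fin 7 → Fin 3 → K :=
  ![![1, 0, 0], ![0, 1, 0], ![0, 0, 1], ![1, 1, 1], ![1 - a, 0, 1], ![1, t, 1], ![1, 1, 0]]

lemma concurrencyConfig_comp_castLE_three (a t : K) :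
    concurrencyConfig a t ∘ Fin.castLE (by decide) = Pi.basisFun K (Fin 3) := by
  ext i j
  fin_cases i <;> fin_cases j <;> simp [concurrencyConfig]

lemma span_range_concurrencyConfig_comp_castLE (a t : K) {k : ℕ} (h3 : 3 ≤ k) (h7 : k ≤ 7) :
    Submodule.span K (range (concurrencyConfig a t ∘ Fin.castLE h7)) = ⊤ := by
  rw [← top_le_iff, ← (Pi.basisFun K (Fin 3)).span_eq, ← concurrencyConfig_comp_castLE_three a t]
  exact Submodule.span_mono (range_subset_range_iff_exists_comp.2 ⟨Fin.castLE h3, rfl⟩)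

lemma det_concurrencyConfig_eq_zero_iff {a t : K} (ha₀ : a ≠ 0) (ha₁ : a ≠ 1) (ht₀ : t ≠ 0)
    (ht₁ : t ≠ 1) {s : Fin 3 → Fin 6} (hs : StrictMono s) :
    (Matrix.of fun i => concurrencyConfig a t ((s i).castLE (by decide))).det = 0 ↔
      s = ![0, 2, 4] ∨ s = ![1, 3, 5] := by
  obtain ⟨i, j, k, rfl⟩ : ∃ i j k, s = ![i, j, k] := ⟨s 0, s 1, s 2, List.ofFn_inj.1 rfl⟩
  have hij : i < j := hs (show (0 : Fin 3) < 1 by decide)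
  have hjk : j < k := hs (show (1 : Fin 3) < 2 by decide)
  have hBDE : -1 + (1 - a) ≠ 0 := by
    rw [neg_add_eq_sub, sub_sub_cancel_left]
    exact neg_ne_zero.2 ha₀
  have hDEF : -t - (1 - a) + 1 + (1 - a) * t ≠ 0 := by
    rw [show -t - (1 - a) + 1 + (1 - a) * t = a * (1 - t) by ring]
    exact mul_ne_zero ha₀ (sub_ne_zero.2 ht₁.symm)
  rw [Matrix.det_fin_three]
  fin_cases i <;> fin_cases j <;> try exact absurd hij (by decide)
  all_goals fin_cases k <;> try exact absurd hjk (by decide)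
  all_goals simp [concurrencyConfig, sub_eq_zero, ha₀, ha₁, ha₁.symm, ht₀, ht₁, ht₁.symm, hBDE,
    hDEF]

lemma prefixMatroid_linearMatroid_concurrencyConfig_eq {a t u : K} (ha₀ : a ≠ 0) (ha₁ : a ≠ 1)
    (ht₀ : t ≠ 0) (ht₁ : t ≠ 1) (hu₀ : u ≠ 0) (hu₁ : u ≠ 1) :
    prefixMatroid (show 6 ≤ 7 by decide) (linearMatroid K (concurrencyConfig a t)) =
      prefixMatroid (by decide) (linearMatroid K (concurrencyConfig a u)) := by
  simp only [prefixMatroid, linearMatroid_comap]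
  refine linearMatroid_eq_of_det_eq_zero_iff
    (span_range_concurrencyConfig_comp_castLE a t (by decide) _)
    (span_range_concurrencyConfig_comp_castLE a u (by decide) _) fun s => ?_
  exact (det_concurrencyConfig_eq_zero_iff ha₀ ha₁ ht₀ ht₁ s.strictMono).trans
    (det_concurrencyConfig_eq_zero_iff ha₀ ha₁ hu₀ hu₁ s.strictMono).symm

lemma linearMatroid_concurrencyConfig_eRk_add_eRk_le (a t : K) :
    (linearMatroid K (concurrencyConfig a t)).eRk {0, 1} +
        (linearMatroid K (concurrencyConfig a t)).eRk {2, 3} ≤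
      1 + (linearMatroid K (concurrencyConfig a t)).eRk ({0, 1} ∪ {2, 3}) := by
  set M := linearMatroid K (concurrencyConfig a t)
  have hABC : M.Indep (range (Fin.castLE (show 3 ≤ 7 by decide))) := by
    rw [linearMatroid_indep_iff, linearIndepOn_range_iff (Fin.castLE_injective _),
      concurrencyConfig_comp_castLE_three]
    exact (Pi.basisFun K (Fin 3)).linearIndependent
  have hrange : range (Fin.castLE (show 3 ≤ 7 by decide)) ⊆ {0, 1} ∪ {2, 3} := by
    rintro _ ⟨i, rfl⟩
    fin_cases i <;> simp
  have hrank : 3 ≤ M.eRk ({0, 1} ∪ {2, 3}) :=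
    calc (3 : ℕ∞) = ENat.card (Fin 3) := by simp
      _ ≤ (range (Fin.castLE (show 3 ≤ 7 by decide))).encard :=
        (Fin.castLE_injective _).encard_range
      _ ≤ M.eRk ({0, 1} ∪ {2, 3}) := hABC.encard_le_eRk_of_subset hrange
  calc M.eRk {0, 1} + M.eRk {2, 3} ≤ 2 + 2 :=
        add_le_add ((M.eRk_le_encard _).trans_eq (encard_pair (by decide)))
          ((M.eRk_le_encard _).trans_eq (encard_pair (by decide)))
    _ = 1 + 3 := by norm_num
    _ ≤ 1 + M.eRk ({0, 1} ∪ {2, 3}) := by gcongr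

lemma concurrencyConfig_mem_closure_inter_closure (a t : K) :
    6 ∈ (linearMatroid K (concurrencyConfig a t)).closure {0, 1} ∩
      (linearMatroid K (concurrencyConfig a t)).closure {2, 3} := by
  simp only [mem_inter_iff, mem_linearMatroid_closure_iff, image_pair, Submodule.mem_span_pair]
  refine ⟨⟨1, 1, ?_⟩, ⟨-1, 1, ?_⟩⟩ <;> simp [concurrencyConfig]

lemma concurrencyConfig_mem_closure_iff {a t : K} (ha : a ≠ 0) :
    6 ∈ (linearMatroid K (concurrencyConfig a t)).closure {4, 5} ↔ t = a := by
  rw [mem_linearMatroid_closure_iff, image_pair, Submodule.mem_span_pair]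
  constructor
  · rintro ⟨r, s, hrs⟩
    have h₀ : r * (1 - a) + s = 1 := by simpa [concurrencyConfig] using congrFun hrs 0
    have h₁ : s * t = 1 := by simpa [concurrencyConfig] using congrFun hrs 1
    have h₂ : r + s = 0 := by simpa [concurrencyConfig] using congrFun hrs 2
    grind
  · rintro rfl
    refine ⟨-t⁻¹, t⁻¹, ?_⟩
    have hX₀ : -(t⁻¹ * (1 - t)) + t⁻¹ = 1 := by
      field_simp
      ring
    ext i
    fin_cases i <;> simp [concurrencyConfig, ha, hX₀]

end Configuration

section Cardinality

lemma exists_ne_of_four_le_card {α : Type*} (h : 4 ≤ ENat.card α) (x y : α) :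
    ∃ a b : α, a ≠ b ∧ (a ≠ x ∧ a ≠ y) ∧ (b ≠ x ∧ b ≠ y) := by
  have hcompl : 1 < (univ \ {x, y} : Set α).encard := by
    by_contra! hle
    have hpair : ({x, y} : Set α).encard ≤ 2 :=
      (encard_insert_le {y} x).trans (by rw [encard_singleton]; norm_num)
    have hcard : ENat.card α ≤ 1 + 2 := by
      rw [← encard_univ]
      exact (encard_le_encard_sdiff_add_encard univ {x, y}).trans (add_le_add hle hpair)
    exact absurd (h.trans hcard) (by decide)
  obtain ⟨a, b, ha, hb, hab⟩ := one_lt_encard_iff.1 hcompl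
  exact ⟨a, b, hab, by simpa using ha, by simpa using hb⟩

lemma natCast_le_card_of_charP (R : Type*) [AddMonoidWithOne R] [IsRightCancelAdd R]
    (p : ℕ) [CharP R p] : (p : ℕ∞) ≤ ENat.card R := by
  have hcard := ((CharP.natCast_injOn_Iio R p).encard_image).symm.trans_le (encard_le_card)
  rwa [← Finset.coe_range, encard_coe_eq_coe_finsetCard, Finset.card_range] at hcard

end Cardinality

theorem stmt13_general (K : Type*) [Field K] (hK : 4 ≤ ENat.card K) (β : Type*) (N : Matroid β) :
    ¬ OMMof (fun _ M => M.E = univ ∧ RepOver K M) N := by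
  intro h
  obtain ⟨a, b, hab, ⟨ha₀, ha₁⟩, hb₀, hb₁⟩ := exists_ne_of_four_le_card hK 0 1
  obtain ⟨g, g', hg, hg', hgg'⟩ := h.exists_rankPreserving_eqOn (show 6 ≤ 7 by decide)
    ⟨linearMatroid_ground, repOver_linearMatroid _⟩ ⟨linearMatroid_ground, repOver_linearMatroid _⟩
    linearMatroid_ground linearMatroid_ground
    (prefixMatroid_linearMatroid_concurrencyConfig_eq ha₀ ha₁ ha₀ ha₁ hb₀ hb₁)
  have hX : ∀ t : K, (linearMatroid K (concurrencyConfig a t)).IsNonloop 6 := fun t =>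
    linearMatroid_isNonloop_iff.2 fun hzero => by
      simpa [concurrencyConfig] using congrFun hzero 0
  have hprefix :
      ({0, 1} ∪ {2, 3} ∪ {4, 5} : Set (Fin 7)) ⊆ range (Fin.castLE (show 6 ≤ 7 by decide)) := by
    rw [Fin.range_castLE]
    grind
  have hEF := hg.mem_closure_of_eqOn hg' (hgg'.mono hprefix)
    (linearMatroid_concurrencyConfig_eRk_add_eRk_le a a) (hX a) (hX b)
    (concurrencyConfig_mem_closure_inter_closure a a)
    (concurrencyConfig_mem_closure_inter_closure a b)
    ((concurrencyConfig_mem_closure_iff ha₀).2 rfl)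
  exact hab ((concurrencyConfig_mem_closure_iff ha₀).1 hEF).symm

/-- Let `K` be a field whose characteristic is a prime `p ≥ 7`.  Then no host matroid `N`
admits an online matroid embedding of the class of all `K`-representable matroids. -/
theorem stmt13 (K : Type*) [Field K] (p : ℕ) (hp : p.Prime) (h7 : 7 ≤ p) [CharP K p]
    (β : Type*) (N : Matroid β) :
    ¬ OMEof (fun _ M => M.E = univ ∧ RepOver K M) N := fun h =>
  have hp4 : (4 : ℕ∞) ≤ p := by exact_mod_cast h7.trans' (by decide)
  stmt13_general K (hp4.trans (natCast_le_card_of_charP K p)) β N h.ommof
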